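/- arXiv:0905.1099 — 2 statements merged into one kernel-verified Lean document; each statement's English description precedes it below -/
import Mathlib

section
/- Let T₁ = λn((n)δ)G where δ = λf(f)0̲ and G = λxλy(x)λz(y)(s̲)z, with s̲ = λnλxλf((n)(f)x)f the successor term. Then for every n ∈ ℕ and every λ-term θₙ ≃β n̲, one has (T₁)θₙ f ≻ (f)(s̲)ⁿ0̲ (f a fresh variable); consequently T₁ is a storage operator for Church integers. -/
/- Pure untyped λ-calculus with de Bruijn indices. -/

inductive Lam : Type
  | var : ℕ → Lam
  | app : Lam → Lam → Lam
  | abs : Lam → Lam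
  deriving DecidableEq

namespace Lam

/-- Renaming of free variables. -/
def rename (ρ : ℕ → ℕ) : Lam → Lam
  | var i => var (ρ i)
  | app u v => app (u.rename ρ) (v.rename ρ)
  | abs u => abs (u.rename (fun i => match i with | 0 => 0 | j+1 => ρ j + 1))

/-- Lifting of a simultaneous substitution under a binder. -/
def liftSub (σ : ℕ → Lam) : ℕ → Lam
  | 0 => var 0
  | i+1 => (σ i).rename (· + 1)

/-- Simultaneous (capture-avoiding) substitution of the free variables. -/
def subst (σ : ℕ → Lam) : Lam → Lam
  | var i => σ i
  | app u v => app (u.subst σ) (v.subst σ)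
  | abs u => abs (u.subst (liftSub σ))

/-- `u.subst0 v` is `u[v/x]` for the first variable. -/
def subst0 (u v : Lam) : Lam :=
  u.subst (fun i => match i with | 0 => v | j+1 => var j)

/-- One step of β-reduction (anywhere in the term). -/
inductive Beta : Lam → Lam → Prop
  | beta (u v : Lam) : Beta (app (abs u) v) (u.subst0 v)
  | appL {u u'} (v) : Beta u u' → Beta (app u v) (app u' v)
  | appR (u) {v v'} : Beta v v' → Beta (app u v) (app u v')
  | abs {u u'} : Beta u u' → Beta (abs u) (abs u')

/-- β-equivalence `≃β`. -/
def BetaEq : Lam → Lam → Prop := Relation.EqvGen Beta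

/-- A term is normal if it has no β-redex. -/
def Normal (t : Lam) : Prop := ∀ u, ¬ Beta t u

def IsAbs : Lam → Prop
  | abs _ => True
  | _ => False

/-- One step of head reduction: reduction of the head redex. -/
inductive HeadStep : Lam → Lam → Prop
  | beta (u v) : HeadStep (app (abs u) v) (u.subst0 v)
  | appL {u u'} (v) : ¬ u.IsAbs → HeadStep u u' → HeadStep (app u v) (app u' v)
  | abs {u u'} : HeadStep u u' → HeadStep (abs u) (abs u')

/-- `HeadRedN n u v` : `u` head-reduces to `v` in exactly `n` steps (`u ≻ v` with `n(u,v) = n`). -/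
inductive HeadRedN : ℕ → Lam → Lam → Prop
  | refl (u) : HeadRedN 0 u u
  | step {n u v w} : HeadStep u v → HeadRedN n v w → HeadRedN (n+1) u w

/-- `u ≻ v` : `v` is obtained from `u` by some head reductions. -/
def HeadRed (u v : Lam) : Prop := ∃ n, HeadRedN n u v

/-- Head normal form. -/
def HeadNF (t : Lam) : Prop := ∀ u, ¬ HeadStep t u

def ClosedUnder : ℕ → Lam → Prop
  | k, var i => i < k
  | k, app u v => ClosedUnder k u ∧ ClosedUnder k v
  | k, abs u => ClosedUnder (k+1) u

/-- Closed λ-term. -/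
def Closed (t : Lam) : Prop := ClosedUnder 0 t

/-- `(f)ⁿx` : `iterApp f n x = (f)(f)…(f)x`. -/
def iterApp (f : Lam) : ℕ → Lam → Lam
  | 0, x => x
  | n+1, x => app f (iterApp f n x)

/-- The Church integer `n̲ = λxλf(f)ⁿx`. -/
def church (n : ℕ) : Lam := abs (abs (iterApp (var 0) n (var 1)))

/-- `(t)w₁…wₖ`. -/
def appList (t : Lam) (ws : List Lam) : Lam := ws.foldl app t

/-- `T` is a storage operator for the closed normal term `t` :
there is `τ ≃β t` such that for every `θ ≃β t` there is a substitution `σ`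
(not touching the fresh variable `f`, represented by the de Bruijn index `0`)
with `(T)θf ≻ (f)σ(τ)`. -/
def IsStorageFor (T t : Lam) : Prop :=
  Closed T ∧ ∃ τ, BetaEq τ t ∧ ∀ θ, BetaEq θ t →
    ∃ σ : ℕ → Lam, σ 0 = var 0 ∧
      HeadRed (app (app T θ) (var 0)) (app (var 0) (τ.subst σ))

end Lam

namespace Lam

/-- `0̲ = λxλf x` is `church 0`; `δ = λf(f)0̲`. -/
def deltaOp : Lam := abs (app (var 0) (church 0))

/-- `s̲ = λnλxλf((n)(f)x)f`, the successor term. -/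
def succL : Lam := abs (abs (abs (app (app (var 2) (app (var 0) (var 1))) (var 0))))

/-- `G = λxλy(x)λz(y)(s̲)z`. -/
def GOp : Lam := abs (abs (app (var 1) (abs (app (var 1) (app succL (var 0))))))

/-- `T₁ = λn((n)δ)G`. -/
def T1 : Lam := abs (app (app (var 0) deltaOp) GOp)

end Lam


namespace Lam

/-- Elements of the Engeler-style model. -/
inductive Ty : Type
  | atom : ℕ → Ty
  | arr : List Ty → Ty → Ty

def cns {α : Type} (x : α) (ρ : ℕ → α) : ℕ → α
  | 0 => x
  | i+1 => ρ i

/-- Denotation of a term. -/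
def den : Lam → (ℕ → Ty → Prop) → Ty → Prop
  | var i, ρ, a => ρ i a
  | app u v, ρ, a => ∃ L, den u ρ (Ty.arr L a) ∧ ∀ b ∈ L, den v ρ b
  | abs u, ρ, a => ∃ L c, a = Ty.arr L c ∧ den u (cns (fun b => b ∈ L) ρ) c

theorem den_mono (u : Lam) : ∀ (ρ ρ' : ℕ → Ty → Prop), (∀ i a, ρ i a → ρ' i a) →
    ∀ a, den u ρ a → den u ρ' a := by
  induction u with
  | var i => intro ρ ρ' h a ha; exact h i a ha
  | app u v ihu ihv =>
    rintro ρ ρ' h a ⟨L, h1, h2⟩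
    exact ⟨L, ihu _ _ h _ h1, fun b hb => ihv _ _ h _ (h2 b hb)⟩
  | abs u ih =>
    rintro ρ ρ' h a ⟨L, c, rfl, h1⟩
    refine ⟨L, c, rfl, ih _ _ ?_ _ h1⟩
    intro i a
    cases i with
    | zero => exact id
    | succ i => exact h i a

theorem den_cont (u : Lam) : ∀ (ρ : ℕ → Ty → Prop) (a : Ty), den u ρ a →
    ∃ r : ℕ → List Ty, (∀ i, ∀ b ∈ r i, ρ i b) ∧ den u (fun i b => b ∈ r i) a := by
  induction u with
  | var i =>
    intro ρ a ha
    refine ⟨fun j => if j = i then [a] else [], ?_, ?_⟩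
    · intro j b hb
      by_cases hj : j = i
      · subst hj
        simp at hb
        subst hb
        exact ha
      · simp [hj] at hb
    · simp [den]
  | app u v ihu ihv =>
    rintro ρ a ⟨L, h1, h2⟩
    obtain ⟨r1, hr1, hd1⟩ := ihu _ _ h1
    have key : ∀ M : List Ty, (∀ b ∈ M, den v ρ b) →
        ∃ r : ℕ → List Ty, (∀ i, ∀ b ∈ r i, ρ i b) ∧ ∀ b ∈ M, den v (fun i b => b ∈ r i) b := by
      intro M
      induction M with
      | nil => intro _; exact ⟨fun _ => [], by simp, by simp⟩
      | cons c M ih =>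
        intro h
        obtain ⟨r, hr, hd⟩ := ih (fun b hb => h b (List.mem_cons_of_mem _ hb))
        obtain ⟨r', hr', hd'⟩ := ihv _ _ (h c List.mem_cons_self)
        refine ⟨fun i => r i ++ r' i, ?_, ?_⟩
        · intro i b hb
          rcases List.mem_append.1 hb with hb | hb
          · exact hr i b hb
          · exact hr' i b hb
        · intro b hb
          rcases List.mem_cons.1 hb with rfl | hb
          · exact den_mono _ _ _ (fun i a ha => List.mem_append.2 (Or.inr ha)) _ hd'
          · exact den_mono _ _ _ (fun i a ha => List.mem_append.2 (Or.inl ha)) _ (hd b hb)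
    obtain ⟨r2, hr2, hd2⟩ := key L h2
    refine ⟨fun i => r1 i ++ r2 i, ?_, L, ?_, ?_⟩
    · intro i b hb
      rcases List.mem_append.1 hb with hb | hb
      · exact hr1 i b hb
      · exact hr2 i b hb
    · exact den_mono _ _ _ (fun i a ha => List.mem_append.2 (Or.inl ha)) _ hd1
    · intro b hb
      exact den_mono _ _ _ (fun i a ha => List.mem_append.2 (Or.inr ha)) _ (hd2 b hb)
  | abs u ih =>
    rintro ρ a ⟨L, c, rfl, h1⟩
    obtain ⟨r, hr, hd⟩ := ih _ _ h1
    refine ⟨fun i => r (i+1), fun i b hb => hr (i+1) b hb, L, c, rfl, ?_⟩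
    refine den_mono _ _ _ ?_ _ hd
    intro i a ha
    cases i with
    | zero => exact hr 0 a ha
    | succ i => exact ha

theorem den_rename (u : Lam) : ∀ (f : ℕ → ℕ) (ρ : ℕ → Ty → Prop),
    den (u.rename f) ρ = den u (fun i => ρ (f i)) := by
  induction u with
  | var i => intro f ρ; rfl
  | app u v ihu ihv =>
    intro f ρ
    funext a
    simp only [rename, den, ihu, ihv]
  | abs u ih =>
    intro f ρ
    funext a
    simp only [rename, den, ih]
    have : ∀ L : List Ty, (fun i => cns (fun b => b ∈ L) ρ
        (match i with | 0 => 0 | j+1 => f j + 1)) = cns (fun b => b ∈ L) (fun i => ρ (f i)) := by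
      intro L; funext i; cases i <;> rfl
    simp only [this]

theorem den_subst (u : Lam) : ∀ (σ : ℕ → Lam) (ρ : ℕ → Ty → Prop),
    den (u.subst σ) ρ = den u (fun i => den (σ i) ρ) := by
  induction u with
  | var i => intro f ρ; rfl
  | app u v ihu ihv =>
    intro f ρ
    funext a
    simp only [subst, den, ihu, ihv]
  | abs u ih =>
    intro σ ρ
    funext a
    simp only [subst, den, ih]
    have : ∀ L : List Ty, (fun i => den (liftSub σ i) (cns (fun b => b ∈ L) ρ))
        = cns (fun b => b ∈ L) (fun i => den (σ i) ρ) := by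
      intro L; funext i
      cases i with
      | zero => rfl
      | succ i => simp only [liftSub, den_rename]; rfl
    simp only [this]

theorem den_beta {u v : Lam} (h : Beta u v) : den u = den v := by
  induction h with
  | beta u v =>
    funext ρ a
    apply propext
    rw [subst0, den_subst]
    constructor
    · rintro ⟨L, ⟨L', c, he, h1⟩, h2⟩
      cases he
      refine den_mono _ _ _ ?_ _ h1
      intro i a ha
      cases i with
      | zero => exact h2 a ha
      | succ i => exact ha
    · intro h
      obtain ⟨r, hr, hd⟩ := den_cont _ _ _ h
      refine ⟨r 0, ⟨r 0, a, rfl, ?_⟩, fun b hb => hr 0 b hb⟩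
      refine den_mono _ _ _ ?_ _ hd
      intro i a ha
      cases i with
      | zero => exact ha
      | succ i => exact hr (i+1) a ha
  | appL v _ ih => funext ρ a; simp only [den, ih]
  | appR u _ ih => funext ρ a; simp only [den, ih]
  | abs _ ih => funext ρ a; simp only [den, ih]

theorem den_betaEq {u v : Lam} (h : BetaEq u v) : den u = den v := by
  induction h with
  | rel _ _ h => exact den_beta h
  | refl => rfl
  | symm _ _ _ ih => exact ih.symm
  | trans _ _ _ _ _ ih1 ih2 => exact ih1.trans ih2

/-! Substitution algebra. -/

theorem rename_subst (u : Lam) : ∀ (f : ℕ → ℕ) (σ : ℕ → Lam),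
    (u.rename f).subst σ = u.subst (fun i => σ (f i)) := by
  induction u with
  | var i => intro f σ; rfl
  | app u v ihu ihv => intro f σ; simp only [rename, subst, ihu, ihv]
  | abs u ih =>
    intro f σ
    simp only [rename, subst, ih]
    congr 2
    funext i
    cases i <;> rfl

theorem rename_rename (u : Lam) : ∀ (f g : ℕ → ℕ),
    (u.rename f).rename g = u.rename (fun i => g (f i)) := by
  induction u with
  | var i => intro f σ; rfl
  | app u v ihu ihv => intro f σ; simp only [rename, ihu, ihv]
  | abs u ih =>
    intro f σ
    simp only [rename, ih]
    congr 2
    funext i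
    cases i <;> rfl

theorem subst_rename (u : Lam) : ∀ (σ : ℕ → Lam) (f : ℕ → ℕ),
    (u.subst σ).rename f = u.subst (fun i => (σ i).rename f) := by
  induction u with
  | var i => intro f σ; rfl
  | app u v ihu ihv => intro f σ; simp only [rename, subst, ihu, ihv]
  | abs u ih =>
    intro f σ
    simp only [rename, subst, ih]
    congr 2
    funext i
    cases i with
    | zero => rfl
    | succ i => simp only [liftSub, rename_rename]

theorem subst_subst (u : Lam) : ∀ (σ τ : ℕ → Lam),
    (u.subst σ).subst τ = u.subst (fun i => (σ i).subst τ) := by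
  induction u with
  | var i => intro f σ; rfl
  | app u v ihu ihv => intro f σ; simp only [subst, ihu, ihv]
  | abs u ih =>
    intro f σ
    simp only [subst, ih]
    congr 2
    funext i
    cases i with
    | zero => rfl
    | succ i => simp only [liftSub, rename_subst, subst_rename]

theorem subst_var (u : Lam) : u.subst var = u := by
  induction u with
  | var i => rfl
  | app u v ihu ihv => simp only [subst, ihu, ihv]
  | abs u ih =>
    have : liftSub var = var := by funext i; cases i <;> rfl
    simp only [subst, this, ih]

theorem subst0_lift (u v : Lam) (σ : ℕ → Lam) :
    (u.subst (liftSub σ)).subst0 v = u.subst (cns v σ) := by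
  rw [subst0, subst_subst]
  congr 1
  funext i
  cases i with
  | zero => rfl
  | succ i =>
    simp only [liftSub, rename_subst]
    exact subst_var _

/-! Weak head reduction. -/

inductive WS : Lam → Lam → Prop
  | beta (u v) : WS (app (abs u) v) (u.subst0 v)
  | appL {u u'} (v) : WS u u' → WS (app u v) (app u' v)

theorem WS.head {u v : Lam} (h : WS u v) : HeadStep u v := by
  induction h with
  | beta u v => exact HeadStep.beta u v
  | appL v h ih =>
    refine HeadStep.appL v ?_ ih
    cases h <;> exact id

def WR : Lam → Lam → Prop := Relation.ReflTransGen WS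

theorem WR.head {u v : Lam} (h : WR u v) : HeadRed u v := by
  induction h using Relation.ReflTransGen.head_induction_on with
  | refl => exact ⟨0, HeadRedN.refl _⟩
  | head h _ ih =>
    obtain ⟨n, hn⟩ := ih
    exact ⟨n+1, HeadRedN.step h.head hn⟩

/-- Realizability. -/
def Real : Ty → Lam → Prop
  | Ty.atom i, t => ∀ y, WR (app t y) (app y (iterApp succL i (church 0)))
  | Ty.arr L a, t => ∀ v, (∀ b, (hb : b ∈ L) → Real b v) → Real a (app t v)
termination_by a => sizeOf a
decreasing_by
  · have := List.sizeOf_lt_of_mem hb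
    simp; omega
  · simp

theorem Real_exp : ∀ (n : ℕ) (a : Ty), sizeOf a ≤ n →
    ∀ t t' : Lam, WS t t' → Real a t' → Real a t := by
  intro n
  induction n with
  | zero => intro a ha; cases a <;> simp at ha
  | succ n ih =>
    intro a ha t t' h hr
    cases a with
    | atom i =>
      rw [Real] at hr ⊢
      intro y
      exact Relation.ReflTransGen.head (WS.appL y h) (hr y)
    | arr L c =>
      rw [Real] at hr ⊢
      intro v hv
      exact ih c (by simp at ha; omega) _ _ (WS.appL v h) (hr v hv)

theorem adequacy (u : Lam) : ∀ (ρ : ℕ → Ty → Prop) (σ : ℕ → Lam),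
    (∀ i b, ρ i b → Real b (σ i)) → ∀ a, den u ρ a → Real a (u.subst σ) := by
  induction u with
  | var i => intro ρ σ h a ha; exact h i a ha
  | app u v ihu ihv =>
    rintro ρ σ h a ⟨L, h1, h2⟩
    have := ihu ρ σ h _ h1
    rw [Real] at this
    exact this _ (fun b hb => ihv ρ σ h b (h2 b hb))
  | abs u ih =>
    rintro ρ σ h a ⟨L, c, rfl, h1⟩
    rw [Real]
    intro v hv
    refine Real_exp _ c le_rfl _ _ (WS.beta _ _) ?_
    rw [subst0_lift]
    refine ih _ _ ?_ _ h1
    intro i b hb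
    cases i with
    | zero => exact hv b hb
    | succ i => exact h i b hb

def fty (n : ℕ) : List Ty := (List.range n).map (fun i => Ty.arr [Ty.atom i] (Ty.atom (i+1)))

def cty (n : ℕ) : Ty := Ty.arr [Ty.atom 0] (Ty.arr (fty n) (Ty.atom n))

theorem den_church (n : ℕ) (ρ : ℕ → Ty → Prop) : den (church n) ρ (cty n) := by
  refine ⟨_, _, rfl, _, _, rfl, ?_⟩
  have : ∀ k, k ≤ n → den (iterApp (var 0) k (var 1))
      (cns (fun b => b ∈ fty n) (cns (fun b => b ∈ [Ty.atom 0]) ρ)) (Ty.atom k) := by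
    intro k
    induction k with
    | zero => intro _; simp [iterApp, den, cns]
    | succ k ih =>
      intro hk
      refine ⟨[Ty.atom k], ?_, ?_⟩
      · simp only [den, cns, fty, List.mem_map, List.mem_range]
        exact ⟨k, by omega, rfl⟩
      · intro b hb
        rw [List.mem_singleton.1 hb]
        exact ih (by omega)
  exact this n le_rfl

theorem real_delta : Real (Ty.atom 0) deltaOp := by
  rw [Real]
  intro y
  exact Relation.ReflTransGen.single (WS.beta _ _)

theorem real_G (n : ℕ) : ∀ b ∈ fty n, Real b GOp := by
  intro b hb
  simp only [fty, List.mem_map, List.mem_range] at hb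
  obtain ⟨i, _, rfl⟩ := hb
  rw [Real]
  intro t ht
  have ht := ht (Ty.atom i) (by simp)
  rw [Real] at ht ⊢
  intro y
  refine Relation.ReflTransGen.head (WS.appL _ (WS.beta _ _)) ?_
  refine Relation.ReflTransGen.head (WS.beta _ _) ?_
  have e : ∀ z : Lam, (z.rename (· + 1)).subst (fun i => match i with | 0 => y | j+1 => var j) = z := by
    intro z
    rw [rename_subst]
    exact subst_var z
  have := ht (abs (app (y.rename (· + 1)) (app succL (var 0))))
  have es : ∀ σ, succL.subst σ = succL := fun _ => rfl
  simp only [subst0, subst, liftSub, rename, e, es]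
  refine Relation.ReflTransGen.trans this ?_
  refine Relation.ReflTransGen.single ?_
  have h2 := WS.beta (app (y.rename (· + 1)) (app succL (var 0))) (iterApp succL i (church 0))
  have e2 : ∀ w : Lam, (app (y.rename (· + 1)) (app succL (var 0))).subst0 w = app y (app succL w) := by
    intro w
    simp only [subst0, subst, rename_subst]
    congr 1
    exact subst_var y
  rw [e2] at h2
  exact h2

theorem main1 (n : ℕ) (θ : Lam) (h : BetaEq θ (church n)) :
    HeadRed (app (app T1 θ) (var 0)) (app (var 0) (iterApp succL n (church 0))) := by
  apply WR.head
  refine Relation.ReflTransGen.head (WS.appL _ (WS.beta _ _)) ?_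
  have h1 : den θ (fun _ _ => False) (cty n) := by
    rw [den_betaEq h]; exact den_church n _
  have h2 := adequacy θ _ var (fun _ _ h => h.elim) _ h1
  rw [subst_var, cty, Real] at h2
  have h3 := h2 deltaOp (by
    intro b hb
    rw [List.mem_singleton.1 hb]
    exact real_delta)
  rw [Real] at h3
  have h4 := h3 GOp (real_G n)
  rw [Real] at h4
  exact h4 (var 0)

theorem BetaEq.congR (u : Lam) {v w : Lam} (h : BetaEq v w) : BetaEq (app u v) (app u w) := by
  induction h with
  | rel _ _ h => exact Relation.EqvGen.rel _ _ (Beta.appR u h)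
  | refl => exact Relation.EqvGen.refl _
  | symm _ _ _ ih => exact Relation.EqvGen.symm _ _ ih
  | trans _ _ _ _ _ ih1 ih2 => exact Relation.EqvGen.trans _ _ _ ih1 ih2

theorem iterApp_subst (f x : Lam) (σ : ℕ → Lam) (n : ℕ) :
    (iterApp f n x).subst σ = iterApp (f.subst σ) n (x.subst σ) := by
  induction n with
  | zero => rfl
  | succ n ih => simp only [iterApp, subst, ih]

theorem iterApp_rename (f x : Lam) (σ : ℕ → ℕ) (n : ℕ) :
    (iterApp f n x).rename σ = iterApp (f.rename σ) n (x.rename σ) := by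
  induction n with
  | zero => rfl
  | succ n ih => simp only [iterApp, rename, ih]

theorem iterApp_comm (f x : Lam) (n : ℕ) : iterApp f n (app f x) = app f (iterApp f n x) := by
  induction n with
  | zero => rfl
  | succ n ih => simp only [iterApp, ih]

theorem church_rename (n : ℕ) (f : ℕ → ℕ) : (church n).rename f = church n := by
  simp only [church, rename, iterApp_rename]

theorem succ_church (n : ℕ) : BetaEq (app succL (church n)) (church (n+1)) := by
  have h1 : Beta (app succL (church n))
      (abs (abs (app (app (church n) (app (var 0) (var 1))) (var 0)))) := by
    have := Beta.beta (abs (abs (app (app (var 2) (app (var 0) (var 1))) (var 0)))) (church n)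
    simp only [subst0, subst, liftSub, rename, church_rename] at this
    exact this
  have h2 : Beta (abs (abs (app (app (church n) (app (var 0) (var 1))) (var 0))))
      (abs (abs (app (abs (iterApp (var 0) n (app (var 1) (var 2)))) (var 0)))) := by
    refine Beta.abs (Beta.abs (Beta.appL _ ?_))
    have := Beta.beta (abs (iterApp (var 0) n (var 1))) (app (var 0) (var 1))
    simp only [subst0, subst, liftSub, rename, iterApp_subst] at this
    exact this
  have h3 : Beta (abs (abs (app (abs (iterApp (var 0) n (app (var 1) (var 2)))) (var 0))))
      (church (n+1)) := by
    refine Beta.abs (Beta.abs ?_)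
    have := Beta.beta (iterApp (var 0) n (app (var 1) (var 2))) (var 0)
    simpa only [subst0, subst, iterApp_subst, iterApp_comm, iterApp] using this
  exact Relation.EqvGen.trans _ _ _ (Relation.EqvGen.rel _ _ h1)
    (Relation.EqvGen.trans _ _ _ (Relation.EqvGen.rel _ _ h2) (Relation.EqvGen.rel _ _ h3))

theorem iter_church (n : ℕ) : BetaEq (iterApp succL n (church 0)) (church n) := by
  induction n with
  | zero => exact Relation.EqvGen.refl _
  | succ n ih => exact Relation.EqvGen.trans _ _ _ (BetaEq.congR succL ih) (succ_church n)

end Lam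

open Lam in
theorem stmt3 :
    (∀ (n : ℕ) (θ : Lam), BetaEq θ (church n) →
       HeadRed (app (app T1 θ) (var 0)) (app (var 0) (iterApp succL n (church 0)))) ∧
    (∀ n : ℕ, IsStorageFor T1 (church n)) := by
  refine ⟨main1, fun n => ⟨?_, iterApp succL n (church 0), iter_church n, ?_⟩⟩
  · simp [Closed, T1, ClosedUnder, deltaOp, GOp, succL, church, iterApp]
  · intro θ h
    refine ⟨var, rfl, ?_⟩
    rw [subst_var]
    exact main1 n θ h
end

section
/- Church integers do not have strong storage operators: there is no closed λ-term T such that for every n ∈ ℕ and every λ-term θₙ ≃β n̲, (T)θₙ f ≻ (f)n̲ (f a fresh variable). -/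
namespace Lam

/-- The Church integer `n` occurs as a subterm. -/
def Occ (n : ℕ) : Lam → Prop
  | var _ => False
  | app u v => Occ n u ∨ Occ n v
  | abs u => abs u = church n ∨ Occ n u

def sz : Lam → ℕ
  | var _ => 1
  | app u v => sz u + sz v + 1
  | abs u => sz u + 1

theorem sz_iter (n : ℕ) (f x : Lam) : n ≤ sz (iterApp f n x) := by
  induction n with
  | zero => simp
  | succ n ih => simp only [iterApp, sz]; omega

theorem occ_sz (n : ℕ) (t : Lam) (h : Occ n t) : n < sz t := by
  induction t with
  | var i => exact h.elim
  | app u v hu hv =>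
    simp only [sz]
    rcases h with h | h
    · have := hu h; omega
    · have := hv h; omega
  | abs u hu =>
    rcases h with h | h
    · rw [h]
      have := sz_iter n (var 0) (var 1)
      simp only [church, sz]; omega
    · have := hu h
      simp only [sz]; omega

def up (ρ : ℕ → ℕ) : ℕ → ℕ := fun i => match i with | 0 => 0 | j+1 => ρ j + 1

theorem rename_abs (ρ : ℕ → ℕ) (u : Lam) : (abs u).rename ρ = abs (u.rename (up ρ)) := rfl

theorem rename_iter (ρ : ℕ → ℕ) (n : ℕ) (w : Lam)
    (h : w.rename (up (up ρ)) = iterApp (var 0) n (var 1)) : w = iterApp (var 0) n (var 1) := by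
  induction n generalizing w with
  | zero =>
    cases w with
    | var i =>
      rcases i with _ | _ | i <;> simp_all [rename, iterApp, up]
    | app u v => simp [rename, iterApp] at h
    | abs u => simp [rename, iterApp] at h
  | succ n ih =>
    cases w with
    | var i => simp [rename, iterApp] at h
    | abs u => simp [rename, iterApp] at h
    | app u v =>
      simp only [rename, iterApp, app.injEq] at h
      obtain ⟨h1, h2⟩ := h
      rw [ih v h2]
      cases u with
      | var i =>
        rcases i with _ | i
        · rfl
        · simp [rename, up] at h1
      | app u v => simp [rename] at h1
      | abs u => simp [rename] at h1

theorem rename_church (ρ : ℕ → ℕ) (n : ℕ) (t : Lam) (h : t.rename ρ = church n) :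
    t = church n := by
  cases t with
  | var i => simp [rename, church] at h
  | app u v => simp [rename, church] at h
  | abs u =>
    cases u with
    | var i => simp [rename, church] at h
    | app u v => simp [rename, church] at h
    | abs u =>
      simp only [rename_abs, church, abs.injEq] at h
      rw [rename_iter ρ n u h]; rfl

theorem occ_rename (n : ℕ) (t : Lam) (ρ : ℕ → ℕ) (h : Occ n (t.rename ρ)) : Occ n t := by
  induction t generalizing ρ with
  | var i => exact h.elim
  | app u v hu hv => exact h.imp (hu ρ) (hv ρ)
  | abs u hu =>
    rcases h with h | h
    · exact Or.inl (rename_church ρ n _ h)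
    · exact Or.inr (hu _ h)

theorem no_var1 (n : ℕ) (w : Lam) (h : w.rename (up (· + 1)) = iterApp (var 0) n (var 1)) :
    False := by
  induction n generalizing w with
  | zero =>
    cases w with
    | var i => rcases i with _ | i <;> simp [rename, iterApp, up] at h
    | app u v => simp [rename, iterApp] at h
    | abs u => simp [rename, iterApp] at h
  | succ n ih =>
    cases w with
    | var i => simp [rename, iterApp] at h
    | abs u => simp [rename, iterApp] at h
    | app u v =>
      simp only [rename, iterApp, app.injEq] at h
      exact ih v h.2

theorem shift_ne0 (t : Lam) (h : t.rename (· + 1) = var 0) : False := by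
  cases t <;> simp [rename] at h

theorem shift_ne1 (t : Lam) (h : (t.rename (· + 1)).rename (· + 1) = var 1) : False := by
  cases t <;> simp [rename] at h

theorem subst_iter (σ : ℕ → Lam) (n : ℕ) (w : Lam)
    (h : w.subst (liftSub (liftSub σ)) = iterApp (var 0) n (var 1)) :
    w = iterApp (var 0) n (var 1) := by
  induction n generalizing w with
  | zero =>
    cases w with
    | var i =>
      rcases i with _ | _ | i
      · simp [subst, iterApp, liftSub] at h
      · rfl
      · exact (shift_ne1 _ h).elim
    | app u v => simp [subst, iterApp] at h
    | abs u => simp [subst, iterApp] at h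
  | succ n ih =>
    cases w with
    | var i =>
      rcases i with _ | _ | i
      · simp [subst, iterApp, liftSub] at h
      · simp [subst, iterApp, liftSub, rename] at h
      · simp only [subst, iterApp, liftSub] at h
        cases hs : σ i <;> simp only [hs, rename, app.injEq, reduceCtorEq] at h
        exact (shift_ne0 _ h.1).elim
    | abs u => simp [subst, iterApp] at h
    | app u v =>
      simp only [subst, iterApp, app.injEq] at h
      obtain ⟨h1, h2⟩ := h
      rw [ih v h2]
      cases u with
      | var i =>
        rcases i with _ | i
        · rfl
        · exact (shift_ne0 _ h1).elim
      | app u v => simp [subst] at h1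
      | abs u => simp [subst] at h1

theorem subst_church (σ : ℕ → Lam) (n : ℕ) (u : Lam) (h : (abs u).subst σ = church n) :
    abs u = church n := by
  simp only [subst, church, abs.injEq] at h
  cases u with
  | var i =>
    rcases i with _ | i
    · simp [subst, liftSub] at h
    · simp only [subst, liftSub] at h
      cases hs : σ i with
      | var j => simp [hs, rename] at h
      | app a b => simp [hs, rename] at h
      | abs w =>
        rw [hs, rename_abs, abs.injEq] at h
        exact (no_var1 n w h).elim
  | app u v => simp [subst] at h
  | abs w =>
    simp only [subst, abs.injEq] at h
    rw [subst_iter σ n w h]; rfl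

theorem occ_subst (n : ℕ) (t : Lam) (σ : ℕ → Lam) (h : Occ n (t.subst σ)) :
    Occ n t ∨ ∃ i, Occ n (σ i) := by
  induction t generalizing σ with
  | var i => exact Or.inr ⟨i, h⟩
  | app u v hu hv =>
    rcases h with h | h
    · exact (hu σ h).imp Or.inl id
    · exact (hv σ h).imp Or.inr id
  | abs u hu =>
    rcases h with h | h
    · exact Or.inl (Or.inl (subst_church σ n u h))
    · rcases hu _ h with h | ⟨i, h⟩
      · exact Or.inl (Or.inr h)
      · rcases i with _ | i
        · exact h.elim
        · exact Or.inr ⟨i, occ_rename n _ _ h⟩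

theorem occ_headStep (n : ℕ) {u v : Lam} (h : HeadStep u v) (hu : ¬ u.IsAbs) (hv : Occ n v) :
    Occ n u := by
  induction h with
  | beta u v =>
    rcases occ_subst n _ _ hv with h | ⟨i, h⟩
    · exact Or.inl (Or.inr h)
    · rcases i with _ | i
      · exact Or.inr h
      · exact h.elim
  | appL v hn _ ih => exact hv.imp (ih hn) id
  | abs _ _ => exact (hu trivial).elim

theorem headStep_abs {u v : Lam} (h : HeadStep u v) (hu : u.IsAbs) : v.IsAbs := by
  cases h with
  | beta u v => exact hu.elim
  | appL v _ _ => exact hu.elim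
  | abs _ => trivial

theorem occ_headRedN (n : ℕ) {k : ℕ} {u w : Lam} (h : HeadRedN k u w) (hw : ¬ w.IsAbs) :
    ¬ u.IsAbs ∧ (Occ n w → Occ n u) := by
  induction h with
  | refl u => exact ⟨hw, id⟩
  | step hs _ ih =>
    obtain ⟨h1, h2⟩ := ih hw
    have h3 := fun hu => h1 (headStep_abs hs hu)
    exact ⟨h3, fun h => occ_headStep n hs h3 (h2 h)⟩

def theta (n : ℕ) : Lam := abs (abs (app (abs (var 0)) (iterApp (var 0) n (var 1))))

theorem theta_eq (n : ℕ) : BetaEq (theta n) (church n) :=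
  Relation.EqvGen.rel _ _ (Beta.abs (Beta.abs (Beta.beta (var 0) _)))

theorem not_occ_iter (n m : ℕ) : ¬ Occ n (iterApp (var 0) m (var 1)) := by
  induction m with
  | zero => exact id
  | succ m ih => exact fun h => h.elim id ih

theorem not_occ_theta (n : ℕ) : ¬ Occ n (theta n) := by
  rintro (h | h | (h | h) | h)
  · cases n <;> simp [church, iterApp] at h
  · simp [church] at h
  · simp [church] at h
  · exact h
  · exact not_occ_iter n n h

end Lam

open Lam in
/-- Church integers do not have strong storage operators. -/
theorem stmt4 :
    ¬ ∃ T : Lam, Closed T ∧ ∀ (n : ℕ) (θ : Lam), BetaEq θ (church n) →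
        HeadRed (app (app T θ) (var 0)) (app (var 0) (church n)) := by
  rintro ⟨T, _, hT⟩
  obtain ⟨k, hk⟩ := hT (sz T) _ (theta_eq (sz T))
  rcases (occ_headRedN (sz T) hk id).2 (Or.inr (Or.inl rfl)) with (h | h) | h
  · exact absurd (occ_sz _ _ h) (lt_irrefl _)
  · exact not_occ_theta _ h
  · exact h
end
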